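/- Let ζ3 be a primitive cube root of unity. The series S̄B(ζ3, q) := ∑_{n≥1} q^{2n}(-q^{2n+1};q)_∞(q^{2n+1};q)_∞ / ((ζ3 q^{2n};q^2)_∞ (ζ3^{-1} q^{2n};q^2)_∞ (q^{2n+1};q^2)_∞^2) has vanishing coefficient of q^N whenever N ≡ 0 or 1 (mod 3). -/

import Mathlib

/-- The infinite q-Pochhammer symbol `(a; q)_∞ = ∏_{j ≥ 0} (1 - a q^j)`. -/
noncomputable def qPochInf (a q : ℂ) : ℂ := ∏' j : ℕ, (1 - a * q ^ j)

/-- The finite q-Pochhammer symbol `(a; q)_n = ∏_{j = 0}^{n-1} (1 - a q^j)`. -/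
noncomputable def qPoch (a q : ℂ) (n : ℕ) : ℂ := ∏ j ∈ Finset.range n, (1 - a * q ^ j)

/-- The two-variable spt2bar crank generating function
`S̄B(z,q) = ∑_{n≥1} q^{2n}(-q^{2n+1};q)_∞(q^{2n+1};q)_∞ /
  ((zq^{2n};q^2)_∞ (z⁻¹q^{2n};q^2)_∞ (q^{2n+1};q^2)_∞^2)`. -/
noncomputable def SB (z q : ℂ) : ℂ :=
  ∑' n : ℕ,
    q ^ (2 * (n + 1)) * qPochInf (-q ^ (2 * (n + 1) + 1)) q *
        qPochInf (q ^ (2 * (n + 1) + 1)) q /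
      (qPochInf (z * q ^ (2 * (n + 1))) (q ^ 2) *
        qPochInf (z⁻¹ * q ^ (2 * (n + 1))) (q ^ 2) *
        qPochInf (q ^ (2 * (n + 1) + 1)) (q ^ 2) ^ 2)

/-!
Put `Q = q²`. For a primitive cube root of unity `ζ`, subtracting the finite Jacobi triple
product at `z = ζ` from the one at `z = 1`, where it vanishes, gives a Bailey pair relative to
`Q` with `β_n = -(ζQ; Q)_{n-1} (ζ⁻¹Q; Q)_{n-1} / (Q; Q)_{2n}` and `α_l` supported on
`l ≡ 1 (mod 3)`. The Bailey transform with the conjugate pair supplied by the `q`-Gauss sum at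
`ρ₁ = ρ₂ = q` then turns `S̄B(ζ, q)` into a sum over `α_l`, and
`(Q; Q)_∞ (ζQ; Q)_∞ (ζ⁻¹Q; Q)_∞ = (Q³; Q³)_∞` makes the prefactor a function of `q³`. Writing
`l = 3i + 1`, the sum is `q²` times a function of `q³` as well. Hence `S̄B(ζ, q) = q² H(q³)` with
`H` holomorphic on the unit disc.
-/

open Filter Topology

section QPochhammer

variable {a Q : ℂ}

lemma qPoch_zero (a Q : ℂ) : qPoch a Q 0 = 1 := Finset.prod_range_zero _

lemma qPoch_succ (a Q : ℂ) (n : ℕ) : qPoch a Q (n + 1) = qPoch a Q n * (1 - a * Q ^ n) :=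
  Finset.prod_range_succ _ n

lemma qPoch_add (a Q : ℂ) (m n : ℕ) :
    qPoch a Q (m + n) = qPoch a Q m * qPoch (a * Q ^ m) Q n := by
  simp only [qPoch, Finset.prod_range_add, pow_add, mul_assoc]

lemma qPoch_succ' (a Q : ℂ) (n : ℕ) : qPoch a Q (n + 1) = (1 - a) * qPoch (a * Q) Q n := by
  rw [add_comm, qPoch_add, pow_one, qPoch_succ, qPoch_zero, pow_zero, mul_one, one_mul]

lemma qPoch_ne_zero (ha : ∀ j : ℕ, 1 - a * Q ^ j ≠ 0) (n : ℕ) : qPoch a Q n ≠ 0 :=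
  Finset.prod_ne_zero_iff.mpr fun j _ => ha j

lemma one_sub_ne_zero_of_norm_lt_one {R : Type*} [SeminormedRing R] [NormOneClass R] {x : R}
    (hx : ‖x‖ < 1) : 1 - x ≠ 0 :=
  sub_ne_zero.mpr fun h => by simp [← h] at hx

lemma one_sub_mul_pow_ne_zero (ha : ‖a‖ < 1) (hQ : ‖Q‖ < 1) (j : ℕ) : 1 - a * Q ^ j ≠ 0 := by
  refine one_sub_ne_zero_of_norm_lt_one ?_
  rw [norm_mul, norm_pow]
  exact mul_lt_one_of_nonneg_of_lt_one_left (norm_nonneg a) ha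
    (pow_le_one₀ (norm_nonneg Q) hQ.le)

lemma summable_norm_neg_mul_pow (a : ℂ) (hQ : ‖Q‖ < 1) :
    Summable fun j : ℕ => ‖-(a * Q ^ j)‖ := by
  simp only [norm_neg, norm_mul, norm_pow]
  exact (summable_geometric_of_lt_one (norm_nonneg Q) hQ).mul_left _

lemma multipliable_one_sub_mul_pow (a : ℂ) (hQ : ‖Q‖ < 1) :
    Multipliable fun j : ℕ => 1 - a * Q ^ j := by
  simpa only [sub_eq_add_neg] using
    multipliable_one_add_of_summable (summable_norm_neg_mul_pow a hQ)

lemma tendsto_qPoch (a : ℂ) (hQ : ‖Q‖ < 1) :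
    Tendsto (qPoch a Q) atTop (𝓝 (qPochInf a Q)) :=
  (multipliable_one_sub_mul_pow a hQ).tendsto_prod_tprod_nat

lemma qPochInf_ne_zero (hQ : ‖Q‖ < 1) (ha : ∀ j : ℕ, 1 - a * Q ^ j ≠ 0) :
    qPochInf a Q ≠ 0 := by
  simpa only [qPochInf, sub_eq_add_neg] using
    tprod_one_add_ne_zero_of_summable (f := fun j : ℕ => -(a * Q ^ j))
      (by simpa only [← sub_eq_add_neg] using ha) (summable_norm_neg_mul_pow a hQ)

lemma qPochInf_ne_zero_of_norm_lt_one (ha : ‖a‖ < 1) (hQ : ‖Q‖ < 1) : qPochInf a Q ≠ 0 :=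
  qPochInf_ne_zero hQ (one_sub_mul_pow_ne_zero ha hQ)

lemma qPoch_mul_qPochInf (a : ℂ) (hQ : ‖Q‖ < 1) (n : ℕ) :
    qPoch a Q n * qPochInf (a * Q ^ n) Q = qPochInf a Q := by
  have hshift (j : ℕ) : 1 - a * Q ^ n * Q ^ j = 1 - a * Q ^ (j + n) := by ring
  rw [qPoch, qPochInf, qPochInf, tprod_congr hshift]
  exact Multipliable.prod_mul_tprod_nat_mul' (f := fun j => 1 - a * Q ^ j)
    ((multipliable_one_sub_mul_pow (a * Q ^ n) hQ).congr hshift)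

lemma qPochInf_mul_pow (hQ : ‖Q‖ < 1) (ha : qPochInf a Q ≠ 0) (n : ℕ) :
    qPochInf (a * Q ^ n) Q = qPochInf a Q / qPoch a Q n := by
  have hsplit := qPoch_mul_qPochInf a hQ n
  rw [eq_div_iff (left_ne_zero_of_mul (hsplit ▸ ha)), mul_comm, hsplit]

lemma qPochInf_neg_mul_qPochInf (a : ℂ) (hQ : ‖Q‖ < 1) :
    qPochInf (-a) Q * qPochInf a Q = qPochInf (a ^ 2) (Q ^ 2) := by
  rw [qPochInf, qPochInf, qPochInf, ← (multipliable_one_sub_mul_pow (-a) hQ).tprod_mul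
    (multipliable_one_sub_mul_pow a hQ)]
  exact tprod_congr fun j => by ring

lemma exists_norm_le_of_tendsto {E : Type*} [SeminormedAddCommGroup E] {u : ℕ → E} {l : E}
    (hu : Tendsto u atTop (𝓝 l)) :
    ∃ C : ℝ, 0 ≤ C ∧ ∀ n, ‖u n‖ ≤ C := by
  obtain ⟨C, hC⟩ := hu.norm.bddAbove_range
  exact ⟨C, (norm_nonneg _).trans (hC ⟨0, rfl⟩), fun n => hC ⟨n, rfl⟩⟩

lemma exists_norm_qPoch_le (a : ℂ) (hQ : ‖Q‖ < 1) :
    ∃ C : ℝ, 0 ≤ C ∧ ∀ n, ‖qPoch a Q n‖ ≤ C :=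
  exists_norm_le_of_tendsto (tendsto_qPoch a hQ)

lemma exists_norm_inv_qPoch_le (hQ : ‖Q‖ < 1) (ha : ∀ j : ℕ, 1 - a * Q ^ j ≠ 0) :
    ∃ C : ℝ, 0 ≤ C ∧ ∀ n, ‖(qPoch a Q n)⁻¹‖ ≤ C :=
  exists_norm_le_of_tendsto ((tendsto_qPoch a hQ).inv₀ (qPochInf_ne_zero hQ ha))

end QPochhammer

section QGauss

variable {Q a b x : ℂ}

/-- The `n`-th term of the `q`-Gauss series `₂φ₁(a, b; c; Q, c / (a b))`, parametrised by
its argument `x = c / (a b)` so that `a = 0` and `b = 0` are allowed. -/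
noncomputable def qGaussTerm (Q a b x : ℂ) (n : ℕ) : ℂ :=
  qPoch a Q n * qPoch b Q n * (qPoch (a * b * x) Q n)⁻¹ * (qPoch Q Q n)⁻¹ * x ^ n

-- The difference is written as `F n - F (n + 1)` with `F 0 = 0`, so that it telescopes.
lemma qGaussTerm_contiguous (hQ : ‖Q‖ < 1) (hc : ∀ j : ℕ, 1 - a * b * x * Q ^ j ≠ 0) (n : ℕ) :
    (1 - a * b * x) * (1 - x) * qGaussTerm Q a b x n -
        (1 - a * x) * (1 - b * x) * qGaussTerm Q a b (x * Q) n =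
      (1 - a * b * x) * ((1 - Q ^ n) * qGaussTerm Q a b x n) -
        (1 - a * b * x) * ((1 - Q ^ (n + 1)) * qGaussTerm Q a b x (n + 1)) := by
  have hc₀ : 1 - a * b * x ≠ 0 := by simpa using hc 0
  have hshift : qPoch (a * b * (x * Q)) Q n =
      qPoch (a * b * x) Q n * (1 - a * b * x * Q ^ n) / (1 - a * b * x) := by
    rw [← qPoch_succ, qPoch_succ', mul_div_cancel_left₀ _ hc₀, mul_assoc (a * b)]
  have hden := qPoch_ne_zero hc n
  have hdenQ := qPoch_ne_zero (one_sub_mul_pow_ne_zero hQ hQ) n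
  have hn := hc n
  have hnQ : 1 - Q ^ n * Q ≠ 0 := mul_comm Q (Q ^ n) ▸ one_sub_mul_pow_ne_zero hQ hQ n
  simp only [qGaussTerm, hshift, qPoch_succ, mul_pow, pow_succ _ n]
  generalize Q ^ n = N at *
  field_simp
  ring

lemma exists_norm_qGaussTerm_le (a b : ℂ) (hQ : ‖Q‖ < 1)
    (hc : ∀ j : ℕ, 1 - a * b * x * Q ^ j ≠ 0) :
    ∃ C : ℝ, ∀ k n : ℕ, ‖qGaussTerm Q a b (x * Q ^ k) n‖ ≤ C * ‖x‖ ^ n := by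
  obtain ⟨A, hA₀, hA⟩ := exists_norm_qPoch_le a hQ
  obtain ⟨B, hB₀, hB⟩ := exists_norm_qPoch_le b hQ
  obtain ⟨C, hC₀, hC⟩ := exists_norm_qPoch_le (a * b * x) hQ
  obtain ⟨D, hD₀, hD⟩ := exists_norm_inv_qPoch_le hQ hc
  obtain ⟨E, hE₀, hE⟩ := exists_norm_inv_qPoch_le hQ (one_sub_mul_pow_ne_zero hQ hQ)
  refine ⟨A * B * (C * D) * E, fun k n => ?_⟩
  have hshift : (qPoch (a * b * (x * Q ^ k)) Q n)⁻¹ =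
      qPoch (a * b * x) Q k * (qPoch (a * b * x) Q (k + n))⁻¹ := by
    rw [qPoch_add, mul_inv, mul_inv_cancel_left₀ (qPoch_ne_zero hc k), mul_assoc (a * b)]
  have hpow : ‖x * Q ^ k‖ ≤ ‖x‖ := by
    rw [norm_mul, norm_pow]
    exact mul_le_of_le_one_right (norm_nonneg x) (pow_le_one₀ (norm_nonneg Q) hQ.le)
  simp only [qGaussTerm, hshift, norm_mul _ (_ ^ n), norm_mul _ (qPoch Q Q n)⁻¹,
    norm_mul _ (_ * _⁻¹), norm_mul (qPoch _ Q _), norm_pow _ n]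
  gcongr
  exacts [hA n, hB n, hC k, hD (k + n), hE n]

lemma summable_qGaussTerm (hQ : ‖Q‖ < 1) (hx : ‖x‖ < 1)
    (hc : ∀ j : ℕ, 1 - a * b * x * Q ^ j ≠ 0) : Summable (qGaussTerm Q a b x) := by
  obtain ⟨C, hC⟩ := exists_norm_qGaussTerm_le a b hQ hc
  refine .of_norm_bounded ((summable_geometric_of_lt_one (norm_nonneg x) hx).mul_left C) ?_
  simpa using hC 0

lemma tsum_qGaussTerm_contiguous (hQ : ‖Q‖ < 1) (hx : ‖x‖ < 1)
    (hc : ∀ j : ℕ, 1 - a * b * x * Q ^ j ≠ 0) :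
    (1 - a * b * x) * (1 - x) * ∑' n, qGaussTerm Q a b x n =
      (1 - a * x) * (1 - b * x) * ∑' n, qGaussTerm Q a b (x * Q) n := by
  have hxQ : ‖x * Q‖ < 1 := by
    rw [norm_mul]; exact mul_lt_one_of_nonneg_of_lt_one_left (norm_nonneg x) hx hQ.le
  have hcQ (j : ℕ) : 1 - a * b * (x * Q) * Q ^ j ≠ 0 := by
    convert hc (j + 1) using 2; ring
  have hsum := summable_qGaussTerm hQ hx hc
  have hsumQ := summable_qGaussTerm hQ hxQ hcQ
  have hdiff := (hsum.mul_left ((1 - a * b * x) * (1 - x))).sub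
    (hsumQ.mul_left ((1 - a * x) * (1 - b * x)))
  have hlim : Tendsto (fun n => (1 - a * b * x) * ((1 - Q ^ n) * qGaussTerm Q a b x n))
      atTop (𝓝 ((1 - a * b * x) * ((1 - 0) * 0))) :=
    (((tendsto_pow_atTop_nhds_zero_of_norm_lt_one hQ).const_sub 1).mul
      hsum.tendsto_atTop_zero).const_mul _
  have htelescope : HasSum (fun n => (1 - a * b * x) * (1 - x) * qGaussTerm Q a b x n -
      (1 - a * x) * (1 - b * x) * qGaussTerm Q a b (x * Q) n) 0 := by
    rw [hdiff.hasSum_iff_tendsto_nat]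
    simp only [qGaussTerm_contiguous hQ hc, Finset.sum_range_sub']
    simpa using hlim.neg
  rw [← tsum_mul_left, ← tsum_mul_left, ← sub_eq_zero,
    ← (hsum.mul_left _).tsum_sub (hsumQ.mul_left _), htelescope.tsum_eq]

lemma tsum_qGaussTerm_iterate (hQ : ‖Q‖ < 1) (hx : ‖x‖ < 1)
    (hc : ∀ j : ℕ, 1 - a * b * x * Q ^ j ≠ 0) (k : ℕ) :
    qPoch (a * b * x) Q k * qPoch x Q k * ∑' n, qGaussTerm Q a b x n =
      qPoch (a * x) Q k * qPoch (b * x) Q k * ∑' n, qGaussTerm Q a b (x * Q ^ k) n := by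
  induction k with
  | zero => simp only [qPoch_zero, pow_zero, mul_one]
  | succ k ih =>
    have hxk : ‖x * Q ^ k‖ < 1 := by
      rw [norm_mul, norm_pow]
      exact mul_lt_one_of_nonneg_of_lt_one_left (norm_nonneg x) hx
        (pow_le_one₀ (norm_nonneg Q) hQ.le)
    have hck (j : ℕ) : 1 - a * b * (x * Q ^ k) * Q ^ j ≠ 0 := by
      convert hc (k + j) using 2; ring
    have hstep := tsum_qGaussTerm_contiguous hQ hxk hck
    rw [mul_assoc x, ← pow_succ] at hstep
    simp only [qPoch_succ]
    linear_combination (1 - a * b * x * Q ^ k) * (1 - x * Q ^ k) * ih +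
      qPoch (a * x) Q k * qPoch (b * x) Q k * hstep

lemma tendsto_tsum_qGaussTerm (hQ : ‖Q‖ < 1) (hx : ‖x‖ < 1)
    (hc : ∀ j : ℕ, 1 - a * b * x * Q ^ j ≠ 0) :
    Tendsto (fun k => ∑' n, qGaussTerm Q a b (x * Q ^ k) n) atTop (𝓝 1) := by
  have hzero : ∑' n, qGaussTerm Q a b 0 n = 1 := by
    rw [tsum_eq_single 0 fun n hn => by rw [qGaussTerm, zero_pow hn, mul_zero]]
    simp [qGaussTerm, qPoch_zero]
  have hcont (n : ℕ) : ContinuousAt (fun y => qGaussTerm Q a b y n) 0 := by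
    have hden : ContinuousAt (fun y => (qPoch (a * b * y) Q n)⁻¹) 0 := by
      refine ContinuousAt.inv₀ ?_ (by simp [qPoch])
      unfold qPoch
      fun_prop
    unfold qGaussTerm
    fun_prop
  have harg : Tendsto (fun k : ℕ => x * Q ^ k) atTop (𝓝 0) := by
    simpa using (tendsto_pow_atTop_nhds_zero_of_norm_lt_one hQ).const_mul x
  obtain ⟨C, hC⟩ := exists_norm_qGaussTerm_le a b hQ hc
  rw [← hzero]
  exact tendsto_tsum_of_dominated_convergence
    ((summable_geometric_of_lt_one (norm_nonneg x) hx).mul_left C)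
    (fun n => (hcont n).tendsto.comp harg) (.of_forall hC)

theorem hasSum_qGaussTerm (hQ : ‖Q‖ < 1) (hx : ‖x‖ < 1)
    (hc : ∀ j : ℕ, 1 - a * b * x * Q ^ j ≠ 0) :
    HasSum (qGaussTerm Q a b x)
      (qPochInf (a * x) Q * qPochInf (b * x) Q / (qPochInf (a * b * x) Q * qPochInf x Q)) := by
  have hleft := ((tendsto_qPoch (a * b * x) hQ).mul (tendsto_qPoch x hQ)).mul_const
    (∑' n, qGaussTerm Q a b x n)
  have hright := ((tendsto_qPoch (a * x) hQ).mul (tendsto_qPoch (b * x) hQ)).mul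
    (tendsto_tsum_qGaussTerm hQ hx hc)
  simp only [tsum_qGaussTerm_iterate hQ hx hc] at hleft
  have hlim := tendsto_nhds_unique hright hleft
  rw [mul_one] at hlim
  have hden : qPochInf (a * b * x) Q * qPochInf x Q ≠ 0 :=
    mul_ne_zero (qPochInf_ne_zero hQ hc) (qPochInf_ne_zero_of_norm_lt_one hx hQ)
  rw [hlim, mul_div_cancel_left₀ _ hden]
  exact (summable_qGaussTerm hQ hx hc).hasSum

end QGauss

section Bailey

variable {Q : ℂ}

/-- `1 / (Q; Q)_m`, extended by `0` to negative `m`, so that sums over `l ≤ n` of multiples of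
`1 / (Q; Q)_(n - l)` may be treated as sums over all `l`. -/
noncomputable def invQFactorial (Q : ℂ) (m : ℤ) : ℂ :=
  if 0 ≤ m then (qPoch Q Q m.toNat)⁻¹ else 0

lemma invQFactorial_natCast (Q : ℂ) (m : ℕ) : invQFactorial Q m = (qPoch Q Q m)⁻¹ := by
  simp [invQFactorial]

lemma invQFactorial_of_neg (Q : ℂ) {m : ℤ} (hm : m < 0) : invQFactorial Q m = 0 :=
  if_neg hm.not_ge

lemma invQFactorial_sub_one (hQ : ‖Q‖ < 1) (m : ℤ) :
    invQFactorial Q (m - 1) = (1 - Q ^ m) * invQFactorial Q m := by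
  rcases lt_trichotomy m 0 with hm | rfl | hm
  · rw [invQFactorial_of_neg Q hm, invQFactorial_of_neg Q (by lia), mul_zero]
  · rw [invQFactorial_of_neg Q (by lia), zpow_zero, sub_self, zero_mul]
  · obtain ⟨k, rfl⟩ : ∃ k : ℕ, m = (k + 1 : ℕ) := ⟨(m - 1).toNat, by lia⟩
    rw [Nat.cast_succ, add_sub_cancel_right, ← Nat.cast_succ, invQFactorial_natCast,
      invQFactorial_natCast, zpow_natCast, qPoch_succ, mul_inv, pow_succ', mul_left_comm,
      mul_inv_cancel₀ (one_sub_mul_pow_ne_zero hQ hQ k), mul_one]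

lemma exists_norm_invQFactorial_le (hQ : ‖Q‖ < 1) :
    ∃ C : ℝ, 0 ≤ C ∧ ∀ m, ‖invQFactorial Q m‖ ≤ C := by
  obtain ⟨C, hC₀, hC⟩ := exists_norm_inv_qPoch_le hQ (one_sub_mul_pow_ne_zero hQ hQ)
  refine ⟨C, hC₀, fun m => ?_⟩
  rcases lt_or_ge m 0 with hm | hm
  · rwa [invQFactorial_of_neg Q hm, norm_zero]
  · lift m to ℕ using hm
    simpa only [invQFactorial_natCast] using hC m

/-- The kernel `1 / ((Q; Q)_(n - l) (Q; Q)_(n + l + 1))` of the Bailey transform relative to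
`a = Q`, up to the usual factor `1 - Q`. -/
noncomputable def baileyKernel (Q : ℂ) (n l : ℤ) : ℂ :=
  invQFactorial Q (n + l + 1) * invQFactorial Q (n - l)

lemma baileyKernel_of_lt (Q : ℂ) {n l : ℤ} (h : n < l) : baileyKernel Q n l = 0 := by
  rw [baileyKernel, invQFactorial_of_neg Q (sub_neg.mpr h), mul_zero]

lemma baileyKernel_add_left (Q : ℂ) (n l : ℕ) :
    baileyKernel Q ((n + l : ℕ) : ℤ) l =
      (qPoch Q Q (2 * l + 1))⁻¹ * ((qPoch (Q ^ (2 * l + 2)) Q n)⁻¹ * (qPoch Q Q n)⁻¹) := by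
  have hadd : ((n + l : ℕ) : ℤ) + l + 1 = ((2 * l + 1 + n : ℕ) : ℤ) := by push_cast; ring
  have hsub : ((n + l : ℕ) : ℤ) - l = n := by push_cast; ring
  rw [baileyKernel, hadd, hsub, invQFactorial_natCast, invQFactorial_natCast, qPoch_add, mul_inv,
    mul_assoc, ← pow_succ']

lemma exists_norm_baileyKernel_le (hQ : ‖Q‖ < 1) :
    ∃ C : ℝ, ∀ n l, ‖baileyKernel Q n l‖ ≤ C := by
  obtain ⟨C, hC₀, hC⟩ := exists_norm_invQFactorial_le hQ
  refine ⟨C * C, fun n l => ?_⟩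
  rw [baileyKernel, norm_mul]
  exact mul_le_mul (hC _) (hC _) (norm_nonneg _) hC₀

theorem hasSum_conjugate_bailey_pair {ρ₁ ρ₂ x : ℂ} (hQ : ‖Q‖ < 1) (hx : ‖x‖ < 1)
    (hρ : ρ₁ * ρ₂ * x = Q ^ 2) (l : ℕ) :
    HasSum (fun n : ℕ => qPoch ρ₁ Q n * qPoch ρ₂ Q n * x ^ n * baileyKernel Q n l)
      (qPoch ρ₁ Q l * qPoch ρ₂ Q l * x ^ l *
        (qPochInf (ρ₁ * Q ^ l * x) Q * qPochInf (ρ₂ * Q ^ l * x) Q /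
          (qPochInf Q Q * qPochInf x Q))) := by
  have hc : ρ₁ * Q ^ l * (ρ₂ * Q ^ l) * x = Q ^ (2 * l + 2) := by
    linear_combination Q ^ (2 * l) * hρ
  have hcnorm : ‖Q ^ (2 * l + 2)‖ < 1 := by
    rw [norm_pow]; exact pow_lt_one₀ (norm_nonneg Q) hQ (by lia)
  have hgauss := hasSum_qGaussTerm hQ hx (hc ▸ one_sub_mul_pow_ne_zero hcnorm hQ)
  have hsplit := qPoch_mul_qPochInf Q hQ (2 * l + 1)
  rw [← pow_succ'] at hsplit
  have hinitial : ∑ n ∈ Finset.range l,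
      qPoch ρ₁ Q n * qPoch ρ₂ Q n * x ^ n * baileyKernel Q n l = 0 :=
    Finset.sum_eq_zero fun n hn => by
      rw [baileyKernel_of_lt Q (by exact_mod_cast Finset.mem_range.mp hn), mul_zero]
  have hterm (n : ℕ) : qPoch ρ₁ Q (n + l) * qPoch ρ₂ Q (n + l) * x ^ (n + l) *
      baileyKernel Q ((n + l : ℕ) : ℤ) l =
        qPoch ρ₁ Q l * qPoch ρ₂ Q l * x ^ l * (qPoch Q Q (2 * l + 1))⁻¹ *
          qGaussTerm Q (ρ₁ * Q ^ l) (ρ₂ * Q ^ l) x n := by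
    rw [baileyKernel_add_left, qGaussTerm, hc, add_comm n l, qPoch_add, qPoch_add]
    ring
  rw [← hasSum_nat_add_iff' l, hinitial, sub_zero, ← hsplit]
  simp only [hterm]
  rw [hc] at hgauss
  refine (congrArg (HasSum _ · _) ?_).mp (hgauss.mul_left _)
  ring

theorem tsum_bailey_transform {α δ : ℕ → ℂ} (hQ : ‖Q‖ < 1) (hα : Summable α) (hδ : Summable δ) :
    ∑' n : ℕ, δ n * ∑ l ∈ Finset.range (n + 1), α l * baileyKernel Q n l =
      ∑' l : ℕ, α l * ∑' n : ℕ, δ n * baileyKernel Q n l := by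
  obtain ⟨C, hC⟩ := exists_norm_baileyKernel_le hQ
  have hsum : Summable (Function.uncurry fun n l : ℕ => δ n * (α l * baileyKernel Q n l)) := by
    refine .of_norm_bounded ((hδ.norm.mul_of_nonneg hα.norm (fun n => norm_nonneg (δ n))
      (fun l => norm_nonneg (α l))).mul_right C) ?_
    rintro ⟨n, l⟩
    rw [Function.uncurry, norm_mul, norm_mul, ← mul_assoc]
    gcongr
    exact hC n l
  have hfinite (n : ℕ) : ∑ l ∈ Finset.range (n + 1), α l * baileyKernel Q n l =
      ∑' l : ℕ, α l * baileyKernel Q n l :=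
    (tsum_eq_sum fun l hl => by
      rw [baileyKernel_of_lt Q (by simpa using hl), mul_zero]).symm
  simp only [hfinite, ← tsum_mul_left, mul_left_comm (α _)] at hsum ⊢
  exact hsum.tsum_comm.symm

end Bailey

section FiniteTripleProduct

variable {Q : ℂ}

lemma baileyKernel_recurrence (hQ₀ : Q ≠ 0) (hQ : ‖Q‖ < 1) (n l : ℤ) :
    (1 - Q ^ (2 * n + 1)) * (1 - Q ^ (2 * n + 2)) *
        ((1 - Q ^ (2 * l + 1)) * baileyKernel Q (n + 1) l) =
      (1 + Q ^ (2 * n)) * ((1 - Q ^ (2 * l + 1)) * baileyKernel Q n l) +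
        Q ^ (n + l) * ((1 - Q ^ (2 * l + 3)) * baileyKernel Q n (l + 1)) +
        Q ^ (n - l + 1) * ((1 - Q ^ (2 * l - 1)) * baileyKernel Q n (l - 1)) := by
  have hA₁ := invQFactorial_sub_one hQ (n + l + 2)
  have hA₂ := invQFactorial_sub_one hQ (n + l + 1)
  have hB₁ := invQFactorial_sub_one hQ (n - l + 1)
  have hB₂ := invQFactorial_sub_one hQ (n - l)
  rw [show n + l + 2 - 1 = n + l + 1 by ring] at hA₁
  rw [add_sub_cancel_right] at hA₂ hB₁
  simp only [baileyKernel, show n + 1 + l + 1 = n + l + 2 by ring,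
    show n + (l + 1) + 1 = n + l + 2 by ring, show n + (l - 1) + 1 = n + l by ring,
    show n + 1 - l = n - l + 1 by ring, show n - (l + 1) = n - l - 1 by ring,
    show n - (l - 1) = n - l + 1 by ring, hA₂, hA₁, hB₂, hB₁]
  have hl := zpow_ne_zero l hQ₀
  simp only [two_mul, zpow_add₀ hQ₀, zpow_sub₀ hQ₀, zpow_ofNat]
  generalize Q ^ n = N, Q ^ l = L at *
  field_simp
  ring

/-- The weight `(-1)^l Q^(l(l-1)/2) (1 - Q^(2l+1))` with which the Bailey kernel enters the finite
form of the Jacobi triple product, folded along `l ↔ -1 - l`. -/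
noncomputable def tripleProductWeight (Q : ℂ) (l : ℕ) : ℂ :=
  (-1) ^ l * Q ^ l.choose 2 * (1 - Q ^ (2 * l + 1))

lemma choose_two_succ (l : ℕ) : (l + 1).choose 2 = l.choose 2 + l := by
  rw [Nat.choose_succ_succ' l 1, Nat.choose_one_right, add_comm]

/-- The `l`-th term of the finite form of the Jacobi triple product of order `n`, without the
Fourier coefficient in `z`. -/
noncomputable def tripleProductTerm (Q : ℂ) (n l : ℕ) : ℂ :=
  tripleProductWeight Q l * baileyKernel Q n l

lemma tripleProductTerm_of_lt (Q : ℂ) {n l : ℕ} (h : n < l) : tripleProductTerm Q n l = 0 := by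
  rw [tripleProductTerm, baileyKernel_of_lt Q (Nat.cast_lt.mpr h), mul_zero]

lemma tripleProductTerm_succ_succ (hQ₀ : Q ≠ 0) (hQ : ‖Q‖ < 1) (n l : ℕ) :
    (1 - Q ^ (2 * n + 1)) * (1 - Q ^ (2 * n + 2)) * tripleProductTerm Q (n + 1) (l + 1) =
      (1 + Q ^ (2 * n)) * tripleProductTerm Q n (l + 1) -
        Q ^ n * (tripleProductTerm Q n (l + 2) + tripleProductTerm Q n l) := by
  have hrec := baileyKernel_recurrence hQ₀ hQ n (l + 1)
  have hsucc : (n : ℤ) + (l + 1) = ((n + l + 1 : ℕ) : ℤ) := by push_cast; ring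
  have hpred : (n : ℤ) - (l + 1) + 1 = n - l := by ring
  have hodd : 2 * ((l : ℤ) + 1) - 1 = ((2 * l + 1 : ℕ) : ℤ) := by push_cast; ring
  rw [add_sub_cancel_right, hsucc, hpred, hodd, zpow_sub₀ hQ₀] at hrec
  norm_cast at hrec
  have hcancel : Q ^ l.choose 2 * Q ^ l * (Q ^ n / Q ^ l) = Q ^ l.choose 2 * Q ^ n := by
    rw [mul_assoc, mul_div_cancel₀ _ (pow_ne_zero l hQ₀)]
  simp only [tripleProductTerm, tripleProductWeight, choose_two_succ]
  linear_combination (-1) ^ (l + 1) * Q ^ l.choose 2 * Q ^ l * hrec -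
    (-1) ^ l * (1 - Q ^ (2 * l + 1)) * baileyKernel Q n l * hcancel

lemma tripleProductTerm_succ_zero (hQ₀ : Q ≠ 0) (hQ : ‖Q‖ < 1) (n : ℕ) :
    (1 - Q ^ (2 * n + 1)) * (1 - Q ^ (2 * n + 2)) * tripleProductTerm Q (n + 1) 0 =
      (1 + Q ^ (2 * n)) * tripleProductTerm Q n 0 -
        Q ^ n * (tripleProductTerm Q n 1 + tripleProductTerm Q n 0) := by
  have hfold : baileyKernel Q n (0 - 1) = baileyKernel Q n 0 := by
    simp only [baileyKernel]; ring_nf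
  have hrec := baileyKernel_recurrence hQ₀ hQ n 0
  rw [hfold, sub_zero, add_zero, zero_add, mul_zero, zero_sub, zero_add, zero_add,
    zpow_neg_one] at hrec
  norm_cast at hrec
  have hcancel : Q * Q⁻¹ = 1 := mul_inv_cancel₀ hQ₀
  simp only [tripleProductTerm, tripleProductWeight, Nat.choose_zero_succ, Nat.choose_succ_self,
    Nat.cast_zero, Nat.cast_one]
  linear_combination hrec - Q ^ n * baileyKernel Q n 0 * hcancel

lemma sum_mul_add_neighbors {R : Type*} [CommRing R] {u : R} {c : ℕ → R}
    (hc₁ : c 1 = (u - 1) * c 0) (hc : ∀ l, c (l + 2) = u * c (l + 1) - c l) (g : ℕ → R) (n : ℕ) :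
    c 0 * (g 1 + g 0) + ∑ l ∈ Finset.range n, c (l + 1) * (g (l + 2) + g l) =
      u * ∑ l ∈ Finset.range (n + 1), c l * g l + c n * g (n + 1) - c (n + 1) * g n := by
  induction n with
  | zero => simp [hc₁]; ring
  | succ n ih =>
    rw [Finset.sum_range_succ, ← add_assoc, ih, Finset.sum_range_succ _ (n + 1), hc n]
    ring

lemma qPoch_mul_qPoch_inv {z : ℂ} (hz : z ≠ 0) (Q : ℂ) (n : ℕ) :
    qPoch z Q n * qPoch z⁻¹ Q n =
      ∏ j ∈ Finset.range n, (1 - (z + z⁻¹) * Q ^ j + Q ^ (2 * j)) := by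
  rw [qPoch, qPoch, ← Finset.prod_mul_distrib]
  exact Finset.prod_congr rfl fun j _ => by
    linear_combination Q ^ (2 * j) * mul_inv_cancel₀ hz

lemma sum_mul_tripleProductTerm_succ (hQ₀ : Q ≠ 0) (hQ : ‖Q‖ < 1) (c : ℕ → ℂ) (n M : ℕ) :
    (1 - Q ^ (2 * n + 1)) * (1 - Q ^ (2 * n + 2)) *
        ∑ l ∈ Finset.range (M + 1), c l * tripleProductTerm Q (n + 1) l =
      (1 + Q ^ (2 * n)) * ∑ l ∈ Finset.range (M + 1), c l * tripleProductTerm Q n l -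
        Q ^ n * (c 0 * (tripleProductTerm Q n 1 + tripleProductTerm Q n 0) +
          ∑ l ∈ Finset.range M,
            c (l + 1) * (tripleProductTerm Q n (l + 2) + tripleProductTerm Q n l)) := by
  induction M with
  | zero =>
    simp only [zero_add, Finset.sum_range_one, Finset.sum_range_zero, add_zero]
    linear_combination c 0 * tripleProductTerm_succ_zero hQ₀ hQ n
  | succ M ih =>
    rw [Finset.sum_range_succ, Finset.sum_range_succ _ (M + 1),
      Finset.sum_range_succ (fun l => c (l + 1) * _)]
    linear_combination ih + c (M + 1) * tripleProductTerm_succ_succ hQ₀ hQ n M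

-- With `c l = ∑_{|k| ≤ l} (-1)^(l - k) z^k` this is the finite Jacobi triple product.
theorem sum_mul_tripleProductTerm (hQ₀ : Q ≠ 0) (hQ : ‖Q‖ < 1) {z : ℂ} (hz : z ≠ 0) {c : ℕ → ℂ}
    (hc₁ : c 1 = (z + z⁻¹ - 1) * c 0) (hc : ∀ l, c (l + 2) = (z + z⁻¹) * c (l + 1) - c l)
    (n : ℕ) :
    (∑ l ∈ Finset.range (n + 1), c l * tripleProductTerm Q n l) * qPoch Q Q (2 * n) =
      c 0 * (qPoch z Q n * qPoch z⁻¹ Q n) := by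
  rw [qPoch_mul_qPoch_inv hz]
  induction n with
  | zero =>
    have hQ₁ := one_sub_ne_zero_of_norm_lt_one hQ
    simp [tripleProductTerm, tripleProductWeight, baileyKernel, invQFactorial, qPoch, hQ₁]
  | succ n ih =>
    have hlast : tripleProductTerm Q n (n + 1) = 0 := tripleProductTerm_of_lt Q n.lt_succ_self
    have hneighbors := sum_mul_add_neighbors hc₁ hc (tripleProductTerm Q n) (n + 1)
    rw [tripleProductTerm_of_lt Q (by lia : n < n + 1 + 1), hlast, mul_zero, mul_zero, add_zero,
      sub_zero, Finset.sum_range_succ _ (n + 1), hlast, mul_zero, add_zero] at hneighbors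
    have hrec := sum_mul_tripleProductTerm_succ hQ₀ hQ c n (n + 1)
    rw [hneighbors, Finset.sum_range_succ (fun l => c l * tripleProductTerm Q n l), hlast,
      mul_zero, add_zero] at hrec
    rw [Finset.prod_range_succ, ← mul_assoc, ← ih, mul_add_one, qPoch_succ, qPoch_succ,
      ← pow_succ', ← pow_succ']
    linear_combination qPoch Q Q (2 * n) * hrec

lemma summable_tripleProductWeight (hQ : ‖Q‖ < 1) : Summable (tripleProductWeight Q) := by
  rw [← summable_nat_add_iff 1]
  have hgeom := summable_geometric_of_lt_one (norm_nonneg Q) hQ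
  refine .of_norm_bounded (hgeom.mul_right 2) fun l => ?_
  have hfactor : ‖1 - Q ^ (2 * (l + 1) + 1)‖ ≤ 2 := by
    refine (norm_sub_le _ _).trans ?_
    rw [norm_one, norm_pow]
    linarith [pow_le_one₀ (n := 2 * (l + 1) + 1) (norm_nonneg Q) hQ.le]
  rw [tripleProductWeight, norm_mul, norm_mul, norm_pow, norm_neg, norm_one, one_pow, one_mul,
    norm_pow]
  have hpow := pow_le_pow_of_le_one (norm_nonneg Q) hQ.le
    (choose_two_succ l ▸ Nat.le_add_left l (l.choose 2))
  gcongr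

end FiniteTripleProduct

section CubicDissection

variable {ζ Q : ℂ}

/-- The indicator function of the residue class `l ≡ 1 (mod 3)`. -/
def oneModThreeIndicator (l : ℕ) : ℂ := if l % 3 = 1 then 1 else 0

lemma oneModThreeIndicator_zero : oneModThreeIndicator 0 = 0 := rfl

lemma oneModThreeIndicator_one : oneModThreeIndicator 1 = 1 := rfl

lemma oneModThreeIndicator_add (l : ℕ) :
    oneModThreeIndicator l + oneModThreeIndicator (l + 1) + oneModThreeIndicator (l + 2) = 1 := by
  have hl : l % 3 = 0 ∨ l % 3 = 1 ∨ l % 3 = 2 := by lia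
  rcases hl with hl | hl | hl <;> simp [oneModThreeIndicator, Nat.add_mod, hl]

lemma add_inv_of_primitiveRoot_three (hζ : IsPrimitiveRoot ζ 3) : ζ + ζ⁻¹ = -1 := by
  have hinv : ζ⁻¹ = ζ ^ 2 := inv_eq_of_mul_eq_one_right (by rw [← pow_succ', hζ.pow_eq_one])
  have hsum := hζ.geom_sum_eq_zero (by norm_num)
  simp only [Finset.sum_range_succ, Finset.sum_range_zero, pow_zero, pow_one] at hsum
  linear_combination hinv + hsum

lemma qPochInf_mul_of_primitiveRoot_three (hζ : IsPrimitiveRoot ζ 3) (a : ℂ) (hQ : ‖Q‖ < 1) :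
    qPochInf a Q * qPochInf (ζ * a) Q * qPochInf (ζ⁻¹ * a) Q = qPochInf (a ^ 3) (Q ^ 3) := by
  have hmult (b : ℂ) := multipliable_one_sub_mul_pow b hQ
  rw [qPochInf, qPochInf, qPochInf, qPochInf, ← (hmult a).tprod_mul (hmult (ζ * a)),
    ← ((hmult a).mul (hmult (ζ * a))).tprod_mul (hmult (ζ⁻¹ * a))]
  have hinv := mul_inv_cancel₀ (hζ.ne_zero three_ne_zero)
  have hadd := add_inv_of_primitiveRoot_three hζ
  refine tprod_congr fun j => ?_
  linear_combination (1 - a * Q ^ j) * ((a * Q ^ j) ^ 2 * hinv - a * Q ^ j * hadd)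

/-- The sequence `α` that forms a Bailey pair with
`-(ζ Q; Q)_{n-1} (ζ⁻¹ Q; Q)_{n-1} / (Q; Q)_{2n}` for a primitive cube root of unity `ζ`. -/
noncomputable def cubicBaileyAlpha (Q : ℂ) (l : ℕ) : ℂ :=
  oneModThreeIndicator l * tripleProductWeight Q l

theorem sum_cubicBaileyAlpha_mul_baileyKernel (hζ : IsPrimitiveRoot ζ 3) (hQ₀ : Q ≠ 0)
    (hQ : ‖Q‖ < 1) (n : ℕ) :
    (∑ l ∈ Finset.range (n + 2), cubicBaileyAlpha Q l * baileyKernel Q (n + 1 : ℕ) l) *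
        qPoch Q Q (2 * (n + 1)) = -(qPoch (ζ * Q) Q n * qPoch (ζ⁻¹ * Q) Q n) := by
  have hζ₀ := hζ.ne_zero three_ne_zero
  have hinv := mul_inv_cancel₀ hζ₀
  have hadd := add_inv_of_primitiveRoot_three hζ
  -- Both `1` and `1 - 3 * oneModThreeIndicator` satisfy the recurrence for the multipliers, at
  -- `z = 1` and `z = ζ`; for `z = 1` the product contains the factor `(1; Q)_{n+1} = 0`.
  have hone := sum_mul_tripleProductTerm hQ₀ hQ one_ne_zero (c := fun _ => 1) (by norm_num)
    (fun _ => by norm_num) (n + 1)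
  have hcubic := sum_mul_tripleProductTerm hQ₀ hQ hζ₀ (c := fun l => 1 - 3 * oneModThreeIndicator l)
    (by rw [hadd, oneModThreeIndicator_zero, oneModThreeIndicator_one]; norm_num)
    (fun l => by linear_combination -3 * oneModThreeIndicator_add l -
      (1 - 3 * oneModThreeIndicator (l + 1)) * hadd) (n + 1)
  rw [qPoch_succ' 1, sub_self, zero_mul, zero_mul, mul_zero] at hone
  simp only [one_mul] at hone
  rw [qPoch_succ', qPoch_succ', oneModThreeIndicator_zero] at hcubic
  have hsplit (l : ℕ) : (1 - 3 * oneModThreeIndicator l) * tripleProductTerm Q (n + 1) l =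
      tripleProductTerm Q (n + 1) l -
        3 * (cubicBaileyAlpha Q l * baileyKernel Q (n + 1 : ℕ) l) := by
    rw [cubicBaileyAlpha, tripleProductTerm]; ring
  rw [Finset.sum_congr rfl fun l _ => hsplit l, Finset.sum_sub_distrib, ← Finset.mul_sum]
    at hcubic
  linear_combination (hone - hcubic -
    qPoch (ζ * Q) Q n * qPoch (ζ⁻¹ * Q) Q n * (hinv - hadd)) / 3

lemma summable_cubicBaileyAlpha (hQ : ‖Q‖ < 1) : Summable (cubicBaileyAlpha Q) := by
  refine .of_norm_bounded (summable_tripleProductWeight hQ).norm fun l => ?_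
  rw [cubicBaileyAlpha, norm_mul]
  refine mul_le_of_le_one_left (norm_nonneg _) ?_
  unfold oneModThreeIndicator
  split_ifs <;> simp

end CubicDissection

section CrankSeries

variable {q : ℂ}

lemma norm_sq_lt_one (hq : ‖q‖ < 1) : ‖q ^ 2‖ < 1 := by
  rw [norm_pow]; exact pow_lt_one₀ (norm_nonneg q) hq two_ne_zero

lemma SB_eq_tsum_qPoch {z : ℂ} (hq : ‖q‖ < 1) (hz : qPochInf (z * q ^ 2) (q ^ 2) ≠ 0)
    (hz' : qPochInf (z⁻¹ * q ^ 2) (q ^ 2) ≠ 0) :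
    SB z q = qPochInf (q ^ 2) (q ^ 2) / (qPochInf (z * q ^ 2) (q ^ 2) *
        qPochInf (z⁻¹ * q ^ 2) (q ^ 2) * qPochInf q (q ^ 2) ^ 2) *
      ∑' n : ℕ, qPoch (z * q ^ 2) (q ^ 2) n * qPoch (z⁻¹ * q ^ 2) (q ^ 2) n /
        qPoch (q ^ 2) (q ^ 2) (2 * (n + 1)) *
          (qPoch q (q ^ 2) (n + 1) * qPoch q (q ^ 2) (n + 1) * (q ^ 2) ^ (n + 1)) := by
  have hQ := norm_sq_lt_one hq
  rw [SB, ← tsum_mul_left]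
  refine tsum_congr fun n => ?_
  have hnum : qPochInf (-q ^ (2 * (n + 1) + 1)) q * qPochInf (q ^ (2 * (n + 1) + 1)) q =
      qPochInf (q ^ 2) (q ^ 2) / qPoch (q ^ 2) (q ^ 2) (2 * (n + 1)) := by
    rw [qPochInf_neg_mul_qPochInf _ hq,
      ← qPochInf_mul_pow hQ (qPochInf_ne_zero_of_norm_lt_one hQ hQ)]
    ring_nf
  have hden (y : ℂ) : y * q ^ (2 * (n + 1)) = y * q ^ 2 * (q ^ 2) ^ n := by ring
  have hodd : q ^ (2 * (n + 1) + 1) = q * (q ^ 2) ^ (n + 1) := by ring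
  rw [mul_assoc (q ^ _), hnum, hden, hden, hodd, qPochInf_mul_pow hQ hz, qPochInf_mul_pow hQ hz',
    qPochInf_mul_pow hQ (qPochInf_ne_zero_of_norm_lt_one hq hQ), ← pow_mul]
  simp only [div_eq_mul_inv, mul_inv, inv_inv, mul_pow, inv_pow]
  ring

lemma tsum_qPoch_sq_mul_baileyKernel (hq : ‖q‖ < 1) (l : ℕ) :
    ∑' n : ℕ, qPoch q (q ^ 2) n * qPoch q (q ^ 2) n * (q ^ 2) ^ n * baileyKernel (q ^ 2) n l =
      (qPochInf q (q ^ 2) / qPochInf (q ^ 2) (q ^ 2)) ^ 2 *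
        ((q ^ 2) ^ l / (1 - q ^ (2 * l + 1)) ^ 2) := by
  have hQ := norm_sq_lt_one hq
  rw [(hasSum_conjugate_bailey_pair hQ hQ (by ring) l).tsum_eq]
  have hfactor : 1 - q * (q ^ 2) ^ l ≠ 0 := one_sub_mul_pow_ne_zero hq hQ l
  have hsplit := qPoch_mul_qPochInf q hQ (l + 1)
  rw [qPoch_succ, pow_succ _ l, ← mul_assoc q] at hsplit
  have hodd : q ^ (2 * l + 1) = q * (q ^ 2) ^ l := by ring
  rw [← hsplit, hodd]
  field_simp

lemma summable_qPoch_sq_mul_pow (hq : ‖q‖ < 1) :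
    Summable fun n : ℕ => qPoch q (q ^ 2) n * qPoch q (q ^ 2) n * (q ^ 2) ^ n := by
  have hQ := norm_sq_lt_one hq
  obtain ⟨C, hC₀, hC⟩ := exists_norm_qPoch_le q hQ
  refine .of_norm_bounded
    ((summable_geometric_of_lt_one (norm_nonneg (q ^ 2)) hQ).mul_left (C * C)) fun n => ?_
  rw [norm_mul, norm_mul, norm_pow _ n]
  gcongr <;> exact hC n

lemma tsum_succ_of_zero {M : Type*} [AddCommMonoid M] [TopologicalSpace M] {f : ℕ → M}
    (hf : f 0 = 0) : ∑' n, f (n + 1) = ∑' n, f n := by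
  refine Nat.succ_injective.tsum_eq fun n hn => ?_
  rw [Nat.range_succ]
  exact Nat.pos_of_ne_zero fun hn₀ => hn (hn₀ ▸ hf)

lemma tsum_qPoch_eq_tsum_cubicBaileyAlpha {ζ : ℂ} (hζ : IsPrimitiveRoot ζ 3) (hq₀ : q ≠ 0)
    (hq : ‖q‖ < 1) :
    ∑' n : ℕ, qPoch (ζ * q ^ 2) (q ^ 2) n * qPoch (ζ⁻¹ * q ^ 2) (q ^ 2) n /
        qPoch (q ^ 2) (q ^ 2) (2 * (n + 1)) *
          (qPoch q (q ^ 2) (n + 1) * qPoch q (q ^ 2) (n + 1) * (q ^ 2) ^ (n + 1)) =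
      -((qPochInf q (q ^ 2) / qPochInf (q ^ 2) (q ^ 2)) ^ 2 *
        ∑' l : ℕ, cubicBaileyAlpha (q ^ 2) l * ((q ^ 2) ^ l / (1 - q ^ (2 * l + 1)) ^ 2)) := by
  have hQ := norm_sq_lt_one hq
  set β : ℕ → ℂ := fun n =>
    ∑ l ∈ Finset.range (n + 1), cubicBaileyAlpha (q ^ 2) l * baileyKernel (q ^ 2) n l
  have hβ₀ : β 0 = 0 := by simp [β, cubicBaileyAlpha, oneModThreeIndicator_zero]
  have hβ (n : ℕ) : qPoch (ζ * q ^ 2) (q ^ 2) n * qPoch (ζ⁻¹ * q ^ 2) (q ^ 2) n /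
      qPoch (q ^ 2) (q ^ 2) (2 * (n + 1)) = -β (n + 1) := by
    rw [div_eq_iff (qPoch_ne_zero (one_sub_mul_pow_ne_zero hQ hQ) _), neg_mul,
      sum_cubicBaileyAlpha_mul_baileyKernel hζ (pow_ne_zero 2 hq₀) hQ, neg_neg]
  have hbailey := tsum_bailey_transform hQ (summable_cubicBaileyAlpha hQ)
    (summable_qPoch_sq_mul_pow hq)
  simp only [tsum_qPoch_sq_mul_baileyKernel hq, mul_left_comm (cubicBaileyAlpha _ _)] at hbailey
  have hshift := tsum_succ_of_zero
    (f := fun n => qPoch q (q ^ 2) n * qPoch q (q ^ 2) n * (q ^ 2) ^ n * β n)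
    (by simp only [hβ₀, mul_zero])
  rw [← tsum_mul_left, ← hbailey]
  refine Eq.trans ?_ (congrArg Neg.neg hshift)
  rw [← tsum_neg]
  exact tsum_congr fun n => by rw [hβ]; ring

theorem SB_eq_tsum_cubicBaileyAlpha {ζ : ℂ} (hζ : IsPrimitiveRoot ζ 3) (hq₀ : q ≠ 0)
    (hq : ‖q‖ < 1) :
    SB ζ q = -(qPochInf (q ^ 6) (q ^ 6))⁻¹ *
      ∑' l : ℕ, cubicBaileyAlpha (q ^ 2) l * ((q ^ 2) ^ l / (1 - q ^ (2 * l + 1)) ^ 2) := by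
  have hQ := norm_sq_lt_one hq
  have hζnorm := hζ.norm'_eq_one three_ne_zero
  have hζq := qPochInf_ne_zero_of_norm_lt_one (a := ζ * q ^ 2) (by simpa [hζnorm] using hQ) hQ
  have hζq' := qPochInf_ne_zero_of_norm_lt_one (a := ζ⁻¹ * q ^ 2) (by simpa [hζnorm] using hQ) hQ
  have hqQ := qPochInf_ne_zero_of_norm_lt_one hq hQ
  have hQQ := qPochInf_ne_zero_of_norm_lt_one hQ hQ
  have hcubic := qPochInf_mul_of_primitiveRoot_three hζ (q ^ 2) hQ
  rw [← pow_mul] at hcubic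
  rw [SB_eq_tsum_qPoch hq hζq hζq', tsum_qPoch_eq_tsum_cubicBaileyAlpha hζ hq₀ hq, ← hcubic]
  field_simp

end CrankSeries

lemma hasSum_residueClass_iff {M : Type*} [AddCommMonoid M] [TopologicalSpace M] {f : ℕ → M}
    {a : M} {k r : ℕ} (hr : r < k) (hf : ∀ n, n % k ≠ r → f n = 0) :
    HasSum (fun i => f (k * i + r)) a ↔ HasSum f a := by
  have hk : k ≠ 0 := by lia
  have hinj : Function.Injective fun i : ℕ => k * i + r := fun i j h => by simpa [hk] using h
  exact hinj.hasSum_iff fun n hn => hf n fun hmod => hn ⟨n / k, hmod ▸ Nat.div_add_mod n k⟩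

theorem exists_coeff_of_differentiableOn {f : ℂ → ℂ}
    (hf : DifferentiableOn ℂ f (Metric.ball 0 1)) {k r : ℕ} (hr : r < k) :
    ∃ a : ℕ → ℂ, (∀ q : ℂ, ‖q‖ < 1 → HasSum (fun N => a N * q ^ N) (q ^ r * f (q ^ k))) ∧
      ∀ N, N % k ≠ r → a N = 0 := by
  have hk : k ≠ 0 := by lia
  set a : ℕ → ℂ := fun N =>
    if N % k = r then ((N / k).factorial : ℂ)⁻¹ * iteratedDeriv (N / k) f 0 else 0
  have ha (N : ℕ) (hN : N % k ≠ r) : a N = 0 := if_neg hN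
  refine ⟨a, fun q hq => ?_, ha⟩
  have hqk : q ^ k ∈ Metric.ball (0 : ℂ) 1 := by
    rw [mem_ball_zero_iff, norm_pow]
    exact pow_lt_one₀ (norm_nonneg q) hq hk
  rw [← hasSum_residueClass_iff hr fun N hN => by rw [ha N hN, zero_mul]]
  refine ((Complex.hasSum_taylorSeries_on_ball hf hqk).mul_left (q ^ r)).congr_fun fun i => ?_
  have hmod : (k * i + r) % k = r := by rw [Nat.mul_add_mod, Nat.mod_eq_of_lt hr]
  have hdiv : (k * i + r) / k = i := by
    rw [Nat.mul_add_div (Nat.pos_of_ne_zero hk), Nat.div_eq_of_lt hr, add_zero]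
  simp only [a, hmod, hdiv, if_true, smul_eq_mul, sub_zero]
  ring

lemma differentiableOn_ball_of_forall_lt {𝕜 E F : Type*} [NontriviallyNormedField 𝕜]
    [NormedAddCommGroup E] [NormedSpace 𝕜 E] [NormedAddCommGroup F] [NormedSpace 𝕜 F]
    {f : E → F} {c : E} {R : ℝ} (hf : ∀ r < R, DifferentiableOn 𝕜 f (Metric.ball c r)) :
    DifferentiableOn 𝕜 f (Metric.ball c R) := fun x hx => by
  obtain ⟨r, hxr, hrR⟩ := exists_between (Metric.mem_ball.mp hx)
  exact ((hf r hrR).differentiableAt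
    (Metric.isOpen_ball.mem_nhds (Metric.mem_ball.mpr hxr))).differentiableWithinAt

lemma norm_pow_le_of_mem_ball {𝕜 : Type*} [NormedDivisionRing 𝕜] {x : 𝕜} {r : ℝ} (hr : r < 1)
    (hx : x ∈ Metric.ball 0 r) {m n : ℕ} (hmn : m ≤ n) : ‖x ^ n‖ ≤ r ^ m := by
  rw [mem_ball_zero_iff] at hx
  rw [norm_pow]
  exact (pow_le_pow_of_le_one (norm_nonneg x) (hx.trans hr).le hmn).trans
    (pow_le_pow_left₀ (norm_nonneg x) hx.le m)

lemma differentiableOn_qPochInf_self :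
    DifferentiableOn ℂ (fun x => qPochInf x x) (Metric.ball 0 1) := by
  simp only [qPochInf, ← pow_succ']
  exact ModularForm.differentiableOn_tprod_one_sub_pow

/-- The function `H` on the unit disc for which `S̄B(ζ₃, q) = q² H(q³)`. -/
noncomputable def crankCubicPart (x : ℂ) : ℂ :=
  (qPochInf (x ^ 2) (x ^ 2))⁻¹ *
    ∑' i : ℕ, (-1) ^ i * x ^ (3 * (i * (i + 1))) * ((1 + x ^ (2 * i + 1)) / (1 - x ^ (2 * i + 1)))

lemma choose_two_three_mul_add_two (i : ℕ) :
    2 * (3 * i + 2).choose 2 = 2 + 3 * (3 * (i * (i + 1))) := by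
  rw [Nat.choose_two_right, Nat.mul_div_cancel' (Nat.even_mul_pred_self _).two_dvd,
    Nat.add_sub_assoc one_le_two]
  ring

lemma cubicBaileyAlpha_three_mul_add_one {q : ℂ} (hq : ‖q‖ < 1) (i : ℕ) :
    cubicBaileyAlpha (q ^ 2) (3 * i + 1) *
        ((q ^ 2) ^ (3 * i + 1) / (1 - q ^ (2 * (3 * i + 1) + 1)) ^ 2) =
      -q ^ 2 * ((-1) ^ i * (q ^ 3) ^ (3 * (i * (i + 1))) *
        ((1 + (q ^ 3) ^ (2 * i + 1)) / (1 - (q ^ 3) ^ (2 * i + 1)))) := by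
  have hindicator : oneModThreeIndicator (3 * i + 1) = 1 := if_pos (by lia)
  have hsign : (-1 : ℂ) ^ (3 * i + 1) = -(-1) ^ i := by rw [pow_succ, pow_mul]; norm_num
  have hpow : (q ^ 2) ^ (3 * i + 1).choose 2 * (q ^ 2) ^ (3 * i + 1) =
      q ^ 2 * (q ^ 3) ^ (3 * (i * (i + 1))) := by
    rw [← pow_add, ← choose_two_succ, ← pow_mul, choose_two_three_mul_add_two, pow_add, pow_mul]
  have hbase : q ^ (2 * (3 * i + 1) + 1) = (q ^ 3) ^ (2 * i + 1) := by ring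
  have hfactor : 1 - (q ^ 2) ^ (2 * (3 * i + 1) + 1) =
      (1 - (q ^ 3) ^ (2 * i + 1)) * (1 + (q ^ 3) ^ (2 * i + 1)) := by ring
  have hden : 1 - (q ^ 3) ^ (2 * i + 1) ≠ 0 := by
    refine one_sub_ne_zero_of_norm_lt_one ?_
    rw [norm_pow, norm_pow]
    exact pow_lt_one₀ (by positivity) (pow_lt_one₀ (norm_nonneg q) hq (by lia)) (by lia)
  rw [cubicBaileyAlpha, tripleProductWeight, hindicator, hsign, hbase, hfactor]
  field_simp
  linear_combination -(1 + (q ^ 3) ^ (2 * i + 1)) * hpow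

theorem SB_eq_crankCubicPart {ζ q : ℂ} (hζ : IsPrimitiveRoot ζ 3) (hq : ‖q‖ < 1) :
    SB ζ q = q ^ 2 * crankCubicPart (q ^ 3) := by
  rcases eq_or_ne q 0 with rfl | hq₀
  · simp [SB]
  have hsupport (l : ℕ) (hl : l % 3 ≠ 1) :
      cubicBaileyAlpha (q ^ 2) l * ((q ^ 2) ^ l / (1 - q ^ (2 * l + 1)) ^ 2) = 0 := by
    rw [cubicBaileyAlpha, oneModThreeIndicator, if_neg hl, zero_mul, zero_mul]
  have htsum := tsum_eq_tsum_of_hasSum_iff_hasSum fun {_} =>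
    (hasSum_residueClass_iff (by norm_num : 1 < 3) hsupport).symm
  rw [SB_eq_tsum_cubicBaileyAlpha hζ hq₀ hq, htsum,
    tsum_congr (cubicBaileyAlpha_three_mul_add_one hq), tsum_mul_left, crankCubicPart, ← pow_mul]
  ring

lemma norm_crankCubicPart_term_le {x : ℂ} {r : ℝ} (hr : r < 1) (hx : x ∈ Metric.ball 0 r)
    (i : ℕ) :
    ‖(-1) ^ i * x ^ (3 * (i * (i + 1))) * ((1 + x ^ (2 * i + 1)) / (1 - x ^ (2 * i + 1)))‖ ≤
      r ^ i * (2 / (1 - r)) := by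
  have hodd : ‖x ^ (2 * i + 1)‖ ≤ r :=
    pow_one r ▸ norm_pow_le_of_mem_ball hr hx (Nat.le_add_left 1 (2 * i))
  have hpow : ‖x ^ (3 * (i * (i + 1)))‖ ≤ r ^ i :=
    norm_pow_le_of_mem_ball hr hx (by nlinarith)
  have hnum : ‖1 + x ^ (2 * i + 1)‖ ≤ 2 := by
    refine (norm_add_le _ _).trans ?_
    rw [norm_one]; linarith
  have hden : 1 - r ≤ ‖1 - x ^ (2 * i + 1)‖ := by
    have htriangle := norm_sub_norm_le (1 : ℂ) (x ^ (2 * i + 1))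
    rw [norm_one] at htriangle; linarith
  have hr₀ : 0 < 1 - r := sub_pos.mpr hr
  rw [norm_mul, norm_mul, norm_div, norm_pow (-1), norm_neg, norm_one, one_pow, one_mul]
  exact mul_le_mul hpow (div_le_div₀ zero_le_two hnum hr₀ hden) (by positivity)
    ((norm_nonneg _).trans hpow)

lemma differentiableOn_crankCubicPart : DifferentiableOn ℂ crankCubicPart (Metric.ball 0 1) := by
  have hsq : Set.MapsTo (fun x : ℂ => x ^ 2) (Metric.ball 0 1) (Metric.ball 0 1) := fun x hx =>
    mem_ball_zero_iff.mpr (norm_sq_lt_one (mem_ball_zero_iff.mp hx))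
  refine ((differentiableOn_qPochInf_self.comp (by fun_prop) hsq).inv fun x hx => ?_).mul
    (differentiableOn_ball_of_forall_lt fun r hr => ?_)
  · have hx₂ := mem_ball_zero_iff.mp (hsq hx)
    exact qPochInf_ne_zero_of_norm_lt_one hx₂ hx₂
  · rcases lt_or_ge r 0 with hr₀ | hr₀
    · rw [Metric.ball_eq_empty.mpr hr₀.le]
      exact differentiableOn_empty
    refine Complex.differentiableOn_tsum_of_summable_norm
      ((summable_geometric_of_lt_one hr₀ hr).mul_right (2 / (1 - r))) (fun i => ?_)
      Metric.isOpen_ball fun i x hx => norm_crankCubicPart_term_le hr hx i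
    refine .mul (by fun_prop) (.div (by fun_prop) (by fun_prop) fun x hx => ?_)
    exact one_sub_ne_zero_of_norm_lt_one
      ((norm_pow_le_of_mem_ball hr hx (Nat.le_add_left 1 (2 * i))).trans_lt (by rwa [pow_one]))

/-- The coefficient of `q^N` in `S̄B(ζ₃, q)` vanishes whenever `N ≡ 0, 1 (mod 3)`. -/
theorem SB_coeff_vanish (ζ : ℂ) (hζ : IsPrimitiveRoot ζ 3) :
    ∃ a : ℕ → ℂ,
      (∀ q : ℂ, ‖q‖ < 1 → SB ζ q = ∑' N : ℕ, a N * q ^ N) ∧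
      ∀ N : ℕ, N % 3 = 0 ∨ N % 3 = 1 → a N = 0 := by
  obtain ⟨a, hsum, hzero⟩ :=
    exists_coeff_of_differentiableOn differentiableOn_crankCubicPart (by norm_num : 2 < 3)
  refine ⟨a, fun q hq => ?_, fun N hN => hzero N (by lia)⟩
  rw [SB_eq_crankCubicPart hζ hq, (hsum q hq).tsum_eq]
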